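/- Let (X_i)_{i∈ℤ} be a stationary ergodic process over a finite alphabet 𝕏 with entropy rate h. For any ε > 0 and any sequence of sample sizes n(k) ≥ 2^{k(h+ε)}, the expected plug-in estimate of the entropy rate converges to the entropy rate: lim_{k→∞} E[H(k, X_1^{n(k)})]/k = h. -/

import Mathlib

open MeasureTheory Filter Real

variable {𝕏 : Type*} [Fintype 𝕏] [Nonempty 𝕏] [DecidableEq 𝕏]
  [MeasurableSpace 𝕏] [MeasurableSingletonClass 𝕏]

/-- The left shift on two-sided sequences: `(shift ω) i = ω (i + 1)`. -/
def shift (ω : ℤ → 𝕏) : ℤ → 𝕏 := fun i => ω (i + 1)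

/-- The block `X_{s+1}^{s+l}` of a sequence `ω`, as a tuple in `𝕏^l`. -/
def blk (s l : ℕ) (ω : ℤ → 𝕏) : Fin l → 𝕏 := fun i => ω ((s : ℤ) + 1 + (i : ℤ))

/-- Shannon entropy (base 2) of a distribution `p` on a finite set:
`H(p) = -∑_{w : p w > 0} p w * log₂ (p w)` (`logb 2 0 = 0`, so zero-mass
points contribute nothing). -/
noncomputable def Hent {A : Type*} [Fintype A] (p : A → ℝ) : ℝ :=
  -∑ w, p w * Real.logb 2 (p w)

/-- Empirical nonoverlapping-block distribution
`p_k(w, x_1^n) = ⌊n/k⌋⁻¹ ∑_{i=1}^{⌊n/k⌋} 1[x_{(i-1)k+1}^{ik} = w]`. -/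
noncomputable def empDist (k n : ℕ) (ω : ℤ → 𝕏) : (Fin k → 𝕏) → ℝ :=
  fun w => (∑ i ∈ Finset.range (n / k), if blk (i * k) k ω = w then (1 : ℝ) else 0) / (n / k : ℕ)

/-- Plug-in estimator `H(k, x_1^n)` of the block entropy. -/
noncomputable def plugIn (k n : ℕ) (ω : ℤ → 𝕏) : ℝ := Hent (empDist k n ω)

/-- True block distribution `p_k(w) = P(X_1^k = w)`. -/
noncomputable def pblock (μ : Measure (ℤ → 𝕏)) (k : ℕ) : (Fin k → 𝕏) → ℝ :=
  fun w => (μ {ω | blk 0 k ω = w}).toReal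

/-- Block entropy `H(k) = H(p_k)`. -/
noncomputable def Hblock (μ : Measure (ℤ → 𝕏)) (k : ℕ) : ℝ := Hent (pblock μ k)

/-- Number `D(k, x_1^n)` of distinct nonoverlapping `k`-blocks in `x_1^n`. -/
noncomputable def Dcount (k n : ℕ) (ω : ℤ → 𝕏) : ℕ :=
  Set.ncard {w : Fin k → 𝕏 | ∃ i < n / k, blk (i * k) k ω = w}

/-- Length bound `K(k, x_1^n)` of the modified `k`-block code:
`K(k,x_1^n) = 2 log₂ k + (n/k)(H(k,x_1^n) + 2) + 3 k log₂|𝕏| (D(k,x_1^n) + 1)`. -/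
noncomputable def Kcode (k n : ℕ) (ω : ℤ → 𝕏) : ℝ :=
  2 * Real.logb 2 k + ((n : ℝ) / k) * (plugIn k n ω + 2)
    + 3 * k * Real.logb 2 (Fintype.card 𝕏) * (Dcount k n ω + 1)

/-- Conditional probability `P(X_1^k = w | ℐ)` given the shift-invariant
σ-algebra `ℐ`, as a function of the sample point. -/
noncomputable def condP (μ : Measure (ℤ → 𝕏)) (k : ℕ) (w : Fin k → 𝕏) : (ℤ → 𝕏) → ℝ :=
  μ[Set.indicator {ω | blk 0 k ω = w} (fun _ => (1 : ℝ)) | MeasurableSpace.invariants shift]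

/-- Conditional block entropy `H(X_1^k | ℐ) = E[-log₂ P(X_1^k = w | ℐ)|_{w = X_1^k}]`. -/
noncomputable def condH (μ : Measure (ℤ → 𝕏)) (k : ℕ) : ℝ :=
  ∫ ω, -Real.logb 2 (condP μ k (blk 0 k ω) ω) ∂μ

/-- `σ(y) = min(2^y, 1)`. -/
noncomputable def sigmaFn (y : ℝ) : ℝ := min ((2 : ℝ) ^ y) 1

/-- Negative part `x⁻ = -x · 1[x < 0]`. -/
noncomputable def nPart (x : ℝ) : ℝ := if x < 0 then -x else 0

/-! The upper bound `E[H(k, X_1^n)] ≤ H(k)` is Jensen's inequality, since the empirical distribution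
is an unbiased estimator of `p_k` and entropy is concave.

For the lower bound, cut the sample into `N = n / k` blocks. A mixture of memoryless codes over a
grid of block distributions describes the sample with `N (H(k, X_1^n) + 1)` bits plus `O(k)` bits
per distinct block, so Gibbs' inequality bounds `H(N k)` by the expectation of this codelength. At
most `2^{kb}` blocks have probability at least `2^{-kb}`, and the expected number of the other
blocks in the sample is `o(N)` when `b > h`, by the Shannon–McMillan theorem; for `h < b < h + ε`
there are therefore only `o(N)` distinct blocks. The half of the Shannon–McMillan theorem used here
follows by comparing `p_k` with an order-`m` Markov likelihood (its total mass is bounded, so `p_k`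
is rarely exponentially smaller), whose growth rate is given by the mean ergodic theorem. -/

section Entropy

variable {A : Type*} [Fintype A] {p : A → ℝ}

lemma Hent_eq_sum_negMulLog_div (p : A → ℝ) : Hent p = (∑ a, negMulLog (p a)) / log 2 := by
  rw [Hent, Finset.sum_div, ← Finset.sum_neg_distrib]
  refine Finset.sum_congr rfl fun a _ => ?_
  rw [logb, negMulLog]
  ring

lemma Hent_nonneg (hp : ∀ a, 0 ≤ p a) (hp1 : ∀ a, p a ≤ 1) : 0 ≤ Hent p := by
  rw [Hent_eq_sum_negMulLog_div]
  exact div_nonneg (Finset.sum_nonneg fun a _ => negMulLog_nonneg (hp a) (hp1 a))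
    (log_nonneg one_le_two)

lemma mul_neg_logb_sub_le {b x y : ℝ} (hb : 1 < b) (hx : 0 ≤ x) (hy : 0 < y) :
    x * -logb b x - x * -logb b y ≤ (y - x) / log b := by
  rcases hx.eq_or_lt with rfl | hx
  · simpa using div_nonneg hy.le (log_pos hb).le
  calc x * -logb b x - x * -logb b y = x * log (y / x) / log b := by
        rw [log_div hy.ne' hx.ne', logb, logb]
        ring
    _ ≤ x * (y / x - 1) / log b := by
        have := log_pos hb
        gcongr
        exact log_le_sub_one_of_pos (div_pos hy hx)
    _ = (y - x) / log b := by
        rw [mul_sub, mul_div_cancel₀ _ hx.ne', mul_one]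

lemma Hent_le_sum_mul_neg_logb_add {q : A → ℝ} (hp : ∀ a, 0 ≤ p a) (hsum : ∑ a, p a = 1)
    (hq : ∀ a, 0 < q a) :
    Hent p ≤ ∑ a, p a * -logb 2 (q a) + logb 2 (∑ a, q a) := by
  set Q := ∑ a, q a
  have : Nonempty A := by
    by_contra hA
    simp [not_nonempty_iff.1 hA] at hsum
  have hQ : 0 < Q := Finset.sum_pos (fun a _ => hq a) Finset.univ_nonempty
  have hnormalized : ∑ a, (p a * -logb 2 (p a) - p a * -logb 2 (q a / Q)) ≤ 0 :=
    calc _ ≤ ∑ a, (q a / Q - p a) / log 2 :=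
          Finset.sum_le_sum fun a _ => mul_neg_logb_sub_le one_lt_two (hp a) (div_pos (hq a) hQ)
      _ = 0 := by
          rw [← Finset.sum_div, Finset.sum_sub_distrib, ← Finset.sum_div, div_self hQ.ne', hsum,
            sub_self, zero_div]
  have hsplit : ∑ a, p a * -logb 2 (q a / Q) = ∑ a, p a * -logb 2 (q a) + logb 2 Q := by
    simp_rw [logb_div (hq _).ne' hQ.ne', neg_sub, sub_eq_add_neg, mul_add, Finset.sum_add_distrib,
      ← Finset.sum_mul, hsum]
    ring
  have hHent : ∑ a, p a * -logb 2 (p a) = Hent p := by simp [Hent]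
  rw [Finset.sum_sub_distrib, hsplit, hHent] at hnormalized
  linarith

lemma integral_Hent_le_Hent_integral {Ω : Type*} [MeasurableSpace Ω] {μ : Measure Ω}
    [IsProbabilityMeasure μ] {P : Ω → A → ℝ} (hP : ∀ ω a, 0 ≤ P ω a)
    (hint : ∀ a, Integrable (P · a) μ) (hlog : ∀ a, Integrable (fun ω => negMulLog (P ω a)) μ) :
    ∫ ω, Hent (P ω) ∂μ ≤ Hent fun a => ∫ ω, P ω a ∂μ := by
  simp_rw [Hent_eq_sum_negMulLog_div]
  rw [integral_div, integral_finsetSum _ fun a _ => hlog a]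
  gcongr with a
  exact concaveOn_negMulLog.le_map_integral continuous_negMulLog.continuousOn isClosed_Ici
    (.of_forall fun ω => hP ω a) (hint a) (hlog a)

end Entropy

section Empirical

variable {ι A : Type*} [Fintype ι] [DecidableEq A]

/-- The empirical distribution (type) of a finite word `y : ι → A`; it is identically `0` for the
empty word. -/
noncomputable def empirical (y : ι → A) (a : A) : ℝ :=
  (∑ i, if y i = a then (1 : ℝ) else 0) / Fintype.card ι

lemma empirical_nonneg (y : ι → A) (a : A) : 0 ≤ empirical y a :=
  div_nonneg (Finset.sum_nonneg fun i _ => by positivity) (Nat.cast_nonneg _)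

lemma empirical_apply_pos (y : ι → A) (i : ι) : 0 < empirical y (y i) := by
  have : Nonempty ι := ⟨i⟩
  refine div_pos (Finset.sum_pos' (fun j _ => by positivity) ⟨i, Finset.mem_univ i, ?_⟩)
    (Nat.cast_pos.2 Fintype.card_pos)
  simp

lemma empirical_eq_zero {y : ι → A} {a : A} (ha : a ∉ Set.range y) : empirical y a = 0 := by
  have : ∀ i, y i ≠ a := fun i hi => ha ⟨i, hi⟩
  simp [empirical, this]

lemma empirical_le_one (y : ι → A) (a : A) : empirical y a ≤ 1 := by
  refine div_le_one_of_le₀ ?_ (Nat.cast_nonneg _)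
  simpa using Finset.card_filter_le Finset.univ (y · = a)

variable [Fintype A]

lemma sum_comp_eq_card_mul_sum_empirical (y : ι → A) (F : A → ℝ) :
    ∑ i, F (y i) = Fintype.card ι * ∑ a, empirical y a * F a := by
  rcases isEmpty_or_nonempty ι with _ | _
  · simp
  have hcard : (Fintype.card ι : ℝ) ≠ 0 := Nat.cast_ne_zero.2 Fintype.card_ne_zero
  calc ∑ i, F (y i) = ∑ a, ∑ i, (if y i = a then (1 : ℝ) else 0) * F a := by
        rw [Finset.sum_comm]
        simp
    _ = Fintype.card ι * ∑ a, empirical y a * F a := by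
        rw [Finset.mul_sum]
        refine Finset.sum_congr rfl fun a _ => ?_
        rw [empirical, ← Finset.sum_mul]
        field_simp

lemma sum_logb_empirical (y : ι → A) :
    ∑ i, logb 2 (empirical y (y i)) = -(Fintype.card ι * Hent (empirical y)) := by
  rw [sum_comp_eq_card_mul_sum_empirical y fun a => logb 2 (empirical y a), Hent, mul_neg, neg_neg]

lemma sum_empirical_le_one (y : ι → A) : ∑ a, empirical y a ≤ 1 := by
  simp_rw [empirical]
  rw [← Finset.sum_div, Finset.sum_comm]
  simpa using div_self_le_one (Fintype.card ι : ℝ)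

end Empirical

lemma ncard_range_le_inv_add_card {ι A : Type*} [Fintype ι] [Fintype A] {p : A → ℝ}
    (hp : ∀ a, 0 ≤ p a) (hsum : ∑ a, p a ≤ 1) {τ : ℝ} (hτ : 0 < τ) (y : ι → A) :
    ((Set.range y).ncard : ℝ) ≤ τ⁻¹ + ∑ i, if p (y i) < τ then 1 else 0 := by
  classical
  set likely : Finset A := {a | τ ≤ p a}
  set unlikely : Finset ι := {i | p (y i) < τ}
  have hlikely : (likely.card : ℝ) ≤ τ⁻¹ := by
    rw [← one_div, le_div_iff₀ hτ, ← nsmul_eq_mul]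
    exact (Finset.card_nsmul_le_sum _ _ _ fun a ha => (Finset.mem_filter.1 ha).2).trans <|
      (Finset.sum_le_univ_sum_of_nonneg hp).trans hsum
  have hsubset : Finset.univ.image y ⊆ likely ∪ unlikely.image y := by
    intro a ha
    obtain ⟨i, -, rfl⟩ := Finset.mem_image.1 ha
    rcases le_or_gt τ (p (y i)) with hi | hi
    · exact Finset.mem_union_left _ (by simpa [likely] using hi)
    · exact Finset.mem_union_right _ (Finset.mem_image_of_mem _ (by simpa [unlikely] using hi))
  have hcard : (Set.range y).ncard ≤ likely.card + unlikely.card := by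
    rw [← Set.image_univ, ← Finset.coe_univ, ← Finset.coe_image, Set.ncard_coe_finset]
    exact (Finset.card_le_card hsubset).trans <| (Finset.card_union_le _ _).trans <|
      Nat.add_le_add_left Finset.card_image_le _
  calc ((Set.range y).ncard : ℝ) ≤ likely.card + unlikely.card := by exact_mod_cast hcard
    _ ≤ τ⁻¹ + ∑ i, if p (y i) < τ then 1 else 0 := by
        rw [Finset.sum_boole]
        gcongr

section MixtureCode

variable {ι A : Type*} [Fintype ι] [Fintype A]

/-- The subprobability `a ↦ g a / (2 |A|)` encoded by the integer vector `g`. -/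
noncomputable def gridDist (g : A → ℕ) (a : A) : ℝ := g a / (2 * Fintype.card A)

/-- The mixture weight of `gridDist g`: each symbol in the support of `g` costs a factor `|A|⁻²`. -/
noncomputable def gridWeight (g : A → ℕ) : ℝ :=
  ∏ a, if g a = 0 then 1 else ((Fintype.card A : ℝ) ^ 2)⁻¹

variable (A) in
/-- The integer vectors with entries at most `|A|` for which `gridDist` has total mass at most one;
they quantize the distributions on `A`. -/
def grid [DecidableEq A] : Finset (A → ℕ) :=
  {g ∈ Fintype.piFinset fun _ => Finset.range (Fintype.card A + 1) |
    ∑ a, g a ≤ 2 * Fintype.card A}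

/-- The mixture of the memoryless codes `y ↦ ∏ i, gridDist g (y i)` over the grid. It is a
universal code: its mass is bounded, and its codelength is governed by the empirical entropy of `y`
and the number of distinct symbols in `y`. -/
noncomputable def mixtureCode [DecidableEq A] (y : ι → A) : ℝ :=
  ∑ g ∈ grid A, gridWeight g * ∏ i, gridDist g (y i)

/-- The grid point obtained by rounding the empirical distribution of `y` up to a multiple of
`|A|⁻¹`. -/
noncomputable def roundedType [DecidableEq A] (y : ι → A) (a : A) : ℕ :=
  ⌈empirical y a * Fintype.card A⌉₊

lemma gridDist_nonneg (g : A → ℕ) (a : A) : 0 ≤ gridDist g a := by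
  rw [gridDist]
  positivity

lemma gridWeight_pos (g : A → ℕ) : 0 < gridWeight g :=
  Finset.prod_pos fun a _ => by
    have := Fintype.card_pos_iff.2 ⟨a⟩
    positivity

variable [DecidableEq A]

lemma sum_gridDist_le_one {g : A → ℕ} (hg : g ∈ grid A) : ∑ a, gridDist g a ≤ 1 := by
  have hsum : ∑ a, g a ≤ 2 * Fintype.card A := (Finset.mem_filter.1 hg).2
  simp_rw [gridDist]
  rw [← Finset.sum_div]
  exact div_le_one_of_le₀ (by exact_mod_cast hsum) (by positivity)

variable (A) in
lemma sum_gridWeight_le_three : ∑ g ∈ grid A, gridWeight g ≤ 3 := by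
  set G := Fintype.card A with hG
  have hsymbol : ∑ j ∈ Finset.range (G + 1), (if j = 0 then (1 : ℝ) else ((G : ℝ) ^ 2)⁻¹)
      = 1 + (G : ℝ)⁻¹ := by
    rw [Finset.sum_range_succ']
    rcases eq_or_ne (G : ℝ) 0 with h | h <;> simp [h, add_comm, pow_two]
  calc ∑ g ∈ grid A, gridWeight g
      ≤ ∑ g ∈ Fintype.piFinset fun _ : A => Finset.range (G + 1), gridWeight g :=
        Finset.sum_le_sum_of_subset_of_nonneg (Finset.filter_subset _ _)
          fun g _ _ => (gridWeight_pos g).le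
    _ = (1 + (G : ℝ)⁻¹) ^ G := by
        simp_rw [gridWeight, ← hG]
        rw [Finset.sum_prod_piFinset _ fun _ (j : ℕ) => if j = 0 then (1 : ℝ) else ((G : ℝ) ^ 2)⁻¹,
          hsymbol, Finset.prod_const, Finset.card_univ, ← hG]
    _ ≤ exp (G : ℝ)⁻¹ ^ G := by
        gcongr
        linarith [add_one_le_exp (G : ℝ)⁻¹]
    _ = exp (G * (G : ℝ)⁻¹) := (exp_nat_mul _ _).symm
    _ ≤ exp 1 := exp_le_exp.2 mul_inv_le_one
    _ ≤ 3 := exp_one_lt_three.le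

variable (ι A) in
lemma sum_mixtureCode_le_three [DecidableEq ι] : ∑ y : ι → A, mixtureCode y ≤ 3 := by
  have hmemoryless (g : A → ℕ) :
      ∑ y : ι → A, ∏ i, gridDist g (y i) = (∑ a, gridDist g a) ^ Fintype.card ι := by
    rw [← Fintype.piFinset_univ, Finset.sum_prod_piFinset _ fun _ => gridDist g, Finset.prod_const,
      Finset.card_univ]
  calc ∑ y : ι → A, mixtureCode y
      = ∑ g ∈ grid A, gridWeight g * (∑ a, gridDist g a) ^ Fintype.card ι := by
        simp_rw [mixtureCode]
        rw [Finset.sum_comm]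
        simp_rw [← Finset.mul_sum, hmemoryless]
    _ ≤ ∑ g ∈ grid A, gridWeight g := Finset.sum_le_sum fun g hg =>
        mul_le_of_le_one_right (gridWeight_pos g).le <|
          pow_le_one₀ (Finset.sum_nonneg fun a _ => gridDist_nonneg g a) (sum_gridDist_le_one hg)
    _ ≤ 3 := sum_gridWeight_le_three A

lemma roundedType_mem_grid (y : ι → A) : roundedType y ∈ grid A := by
  refine Finset.mem_filter.2 ⟨Fintype.mem_piFinset.2 fun a => ?_, ?_⟩
  · rw [Finset.mem_range, Nat.lt_succ_iff]
    exact Nat.ceil_le.2 (mul_le_of_le_one_left (Nat.cast_nonneg _) (empirical_le_one y a))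
  · suffices (∑ a, roundedType y a : ℝ) ≤ 2 * Fintype.card A by exact_mod_cast this
    calc (∑ a, roundedType y a : ℝ) ≤ ∑ a, (empirical y a * Fintype.card A + 1) :=
          Finset.sum_le_sum fun a _ => (Nat.ceil_lt_add_one <|
            mul_nonneg (empirical_nonneg y a) (Nat.cast_nonneg _)).le
      _ = (∑ a, empirical y a) * Fintype.card A + Fintype.card A := by
          rw [Finset.sum_add_distrib, ← Finset.sum_mul]
          simp
      _ ≤ 1 * Fintype.card A + Fintype.card A := by
          gcongr
          exact sum_empirical_le_one y
      _ = 2 * Fintype.card A := by ring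

lemma half_empirical_le_gridDist_roundedType (y : ι → A) (a : A) :
    empirical y a / 2 ≤ gridDist (roundedType y) a := by
  have hcard : (0 : ℝ) < Fintype.card A := Nat.cast_pos.2 (Fintype.card_pos_iff.2 ⟨a⟩)
  calc empirical y a / 2 = empirical y a * Fintype.card A / (2 * Fintype.card A) := by field_simp
    _ ≤ gridDist (roundedType y) a := by
        rw [gridDist]
        gcongr
        exact Nat.le_ceil _

lemma gridDist_roundedType_apply_pos (y : ι → A) (i : ι) : 0 < gridDist (roundedType y) (y i) :=
  (half_pos (empirical_apply_pos y i)).trans_le (half_empirical_le_gridDist_roundedType y (y i))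

lemma neg_logb_gridWeight_roundedType_le (y : ι → A) :
    -logb 2 (gridWeight (roundedType y))
      ≤ 2 * logb 2 (Fintype.card A) * (Set.range y).ncard := by
  have hcard (a : A) : (1 : ℝ) ≤ Fintype.card A :=
    Nat.one_le_cast.2 (Fintype.card_pos_iff.2 ⟨a⟩)
  have hsymbol (a : A) :
      -logb 2 (if roundedType y a = 0 then 1 else ((Fintype.card A : ℝ) ^ 2)⁻¹)
        ≤ if a ∈ Finset.univ.image y then 2 * logb 2 (Fintype.card A) else 0 := by
    have hlog : 0 ≤ logb 2 (Fintype.card A) := logb_nonneg one_lt_two (hcard a)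
    split_ifs with hzero hmem hmem
    · simpa using hlog
    · simp
    · simp [logb_inv, logb_pow]
    · exact absurd (by simp [roundedType, empirical_eq_zero (y := y) (by simpa using hmem)]) hzero
  calc -logb 2 (gridWeight (roundedType y))
      = ∑ a, -logb 2 (if roundedType y a = 0 then 1 else ((Fintype.card A : ℝ) ^ 2)⁻¹) := by
        rw [gridWeight, logb_prod, Finset.sum_neg_distrib]
        intro a _
        have := (zero_lt_one.trans_le (hcard a)).ne'
        split_ifs <;> positivity
    _ ≤ ∑ a, if a ∈ Finset.univ.image y then 2 * logb 2 (Fintype.card A) else 0 :=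
        Finset.sum_le_sum fun a _ => hsymbol a
    _ = 2 * logb 2 (Fintype.card A) * (Set.range y).ncard := by
        rw [Finset.sum_ite_mem, Finset.univ_inter, Finset.sum_const, nsmul_eq_mul, mul_comm,
          ← Set.ncard_coe_finset, Finset.coe_image, Finset.coe_univ, Set.image_univ]

lemma neg_sum_logb_gridDist_roundedType_le (y : ι → A) :
    -∑ i, logb 2 (gridDist (roundedType y) (y i))
      ≤ Fintype.card ι * (Hent (empirical y) + 1) := by
  have hsymbol (i : ι) :
      logb 2 (empirical y (y i)) - 1 ≤ logb 2 (gridDist (roundedType y) (y i)) := by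
    rw [← logb_self_eq_one one_lt_two, ← logb_div (empirical_apply_pos y i).ne' two_ne_zero]
    exact logb_le_logb_of_le one_lt_two (half_pos (empirical_apply_pos y i))
      (half_empirical_le_gridDist_roundedType y (y i))
  have hsum := Finset.sum_le_sum fun i (_ : i ∈ Finset.univ) => hsymbol i
  rw [Finset.sum_sub_distrib, sum_logb_empirical, Finset.sum_const, Finset.card_univ,
    nsmul_eq_mul] at hsum
  linarith

lemma gridWeight_mul_prod_gridDist_roundedType_pos (y : ι → A) :
    0 < gridWeight (roundedType y) * ∏ i, gridDist (roundedType y) (y i) :=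
  mul_pos (gridWeight_pos _) (Finset.prod_pos fun i _ => gridDist_roundedType_apply_pos y i)

lemma gridWeight_mul_prod_gridDist_roundedType_le_mixtureCode (y : ι → A) :
    gridWeight (roundedType y) * ∏ i, gridDist (roundedType y) (y i) ≤ mixtureCode y :=
  Finset.single_le_sum (f := fun g => gridWeight g * ∏ i, gridDist g (y i))
    (fun g _ => mul_nonneg (gridWeight_pos g).le <|
      Finset.prod_nonneg fun i _ => gridDist_nonneg g (y i))
    (roundedType_mem_grid y)

lemma mixtureCode_pos (y : ι → A) : 0 < mixtureCode y :=
  (gridWeight_mul_prod_gridDist_roundedType_pos y).trans_le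
    (gridWeight_mul_prod_gridDist_roundedType_le_mixtureCode y)

lemma neg_logb_mixtureCode_le (y : ι → A) :
    -logb 2 (mixtureCode y) ≤ Fintype.card ι * (Hent (empirical y) + 1)
      + 2 * logb 2 (Fintype.card A) * (Set.range y).ncard := by
  have hle := logb_le_logb_of_le one_lt_two (gridWeight_mul_prod_gridDist_roundedType_pos y)
    (gridWeight_mul_prod_gridDist_roundedType_le_mixtureCode y)
  rw [logb_mul (gridWeight_pos _).ne'
      (Finset.prod_pos fun i _ => gridDist_roundedType_apply_pos y i).ne',
    logb_prod _ _ fun i _ => (gridDist_roundedType_apply_pos y i).ne'] at hle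
  linarith [neg_logb_gridWeight_roundedType_le y, neg_sum_logb_gridDist_roundedType_le y]

end MixtureCode

section MeanErgodic

variable {Ω : Type*} [MeasurableSpace Ω] {μ : Measure Ω} {T : Ω → Ω}

lemma coeFn_birkhoffAverage_compMeasurePreserving {E : Type*} [NormedAddCommGroup E]
    [NormedSpace ℝ E] {p : ENNReal} (hT : MeasurePreserving T μ μ) (x : Lp E p μ) (n : ℕ) :
    ((birkhoffAverage ℝ (Lp.compMeasurePreserving T hT) id n x : Lp E p μ) : Ω → E)
      =ᵐ[μ] birkhoffAverage ℝ T x n := by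
  have hiterate (i : ℕ) : (Lp.compMeasurePreserving T hT)^[i] x =ᵐ[μ] x ∘ T^[i] := by
    rw [Lp.compMeasurePreserving_iterate]
    exact Lp.coeFn_compMeasurePreserving x (hT.iterate i)
  filter_upwards [ae_all_iff.2 hiterate,
    Lp.coeFn_smul (n : ℝ)⁻¹ (∑ i ∈ Finset.range n, (Lp.compMeasurePreserving T hT)^[i] x),
    Lp.coeFn_fun_finsetSum (Finset.range n) fun i => (Lp.compMeasurePreserving T hT)^[i] x]
    with ω hiterate hsmul hsum
  simp only [birkhoffAverage, birkhoffSum, id, hsmul, Pi.smul_apply, hsum, hiterate,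
    Function.comp_apply]

variable [IsProbabilityMeasure μ]

lemma eq_const_integral_of_compMeasurePreserving_eq_self {p : ENNReal} (hT : Ergodic T μ)
    {y : Lp ℝ p μ} (hy : Lp.compMeasurePreserving T hT.toMeasurePreserving y = y) :
    y = Lp.const p μ (∫ ω, y ω ∂μ) := by
  have hinvariant := Lp.coeFn_compMeasurePreserving y hT.toMeasurePreserving
  rw [hy] at hinvariant
  obtain ⟨c, hc⟩ :=
    hT.ae_eq_const_of_ae_eq_comp_ae (Lp.aestronglyMeasurable y) hinvariant.symm
  have hmean : ∫ ω, y ω ∂μ = c := by simp [integral_congr_ae hc]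
  rw [hmean]
  exact Lp.ext (hc.trans (Lp.coeFn_const ..).symm)

lemma inner_const_one_left (x : Lp ℝ 2 μ) : inner ℝ (Lp.const 2 μ (1 : ℝ)) x = ∫ ω, x ω ∂μ := by
  rw [← indicatorConstLp_univ, L2.inner_indicatorConstLp_one, setIntegral_univ]

/-- Von Neumann: the averages converge to the projection onto the invariant functions, which are
constant, and integrating means pairing with the invariant function `1`. -/
lemma tendsto_birkhoffAverage_compMeasurePreserving (hT : Ergodic T μ) (x : Lp ℝ 2 μ) :
    Tendsto (birkhoffAverage ℝ (Lp.compMeasurePreserving T hT.toMeasurePreserving) id · x)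
      atTop (nhds (Lp.const 2 μ (∫ ω, x ω ∂μ))) := by
  let U : Lp ℝ 2 μ →L[ℝ] Lp ℝ 2 μ :=
    (Lp.compMeasurePreservingₗᵢ ℝ T hT.toMeasurePreserving).toContinuousLinearMap
  set S := U.eqLocus (1 : Lp ℝ 2 μ →L[ℝ] Lp ℝ 2 μ)
  set y : Lp ℝ 2 μ := (S.orthogonalProjectionOnto x : Lp ℝ 2 μ) with hy
  have honeInvariant : Lp.const 2 μ (1 : ℝ) ∈ S := rfl
  have hmean : ∫ ω, y ω ∂μ = ∫ ω, x ω ∂μ := by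
    rw [← inner_const_one_left, ← inner_const_one_left, hy]
    exact S.inner_orthogonalProjectionOnto_eq_of_mem_left ⟨_, honeInvariant⟩ x
  have hconst : y = Lp.const 2 μ (∫ ω, x ω ∂μ) := by
    rw [← hmean]
    exact eq_const_integral_of_compMeasurePreserving_eq_self hT (S.orthogonalProjectionOnto x).2
  rw [← hconst]
  exact U.tendsto_birkhoffAverage_orthogonalProjection
    (LinearIsometry.norm_toContinuousLinearMap_le _) x

variable {g : Ω → ℝ}

lemma tendstoInMeasure_birkhoffAverage (hT : Ergodic T μ) (hg : MemLp g 2 μ) :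
    TendstoInMeasure μ (birkhoffAverage ℝ T g) atTop fun _ => ∫ ω, g ω ∂μ := by
  have hcoe (n : ℕ) :
      ((birkhoffAverage ℝ (Lp.compMeasurePreserving T hT.toMeasurePreserving) id n (hg.toLp g) :
        Lp ℝ 2 μ) : Ω → ℝ) =ᵐ[μ] birkhoffAverage ℝ T g n :=
    (coeFn_birkhoffAverage_compMeasurePreserving _ _ n).trans <|
      hT.quasiMeasurePreserving.birkhoffAverage_ae_eq_of_ae_eq ℝ hg.coeFn_toLp n
  have hlim := tendstoInMeasure_of_tendsto_Lp
    (tendsto_birkhoffAverage_compMeasurePreserving hT (hg.toLp g))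
  rw [integral_congr_ae hg.coeFn_toLp] at hlim
  exact (hlim.congr_left hcoe).congr_right (Lp.coeFn_const ..)

lemma tendsto_measureReal_le_birkhoffAverage (hT : Ergodic T μ) (hg : MemLp g 2 μ) {c : ℝ}
    (hc : ∫ ω, g ω ∂μ < c) :
    Tendsto (fun n => μ.real {ω | c ≤ birkhoffAverage ℝ T g n ω}) atTop (nhds 0) := by
  refine squeeze_zero (fun n => measureReal_nonneg) (fun n => measureReal_mono fun ω hω => ?_)
    (tendstoInMeasure_iff_measureReal_norm.1 (tendstoInMeasure_birkhoffAverage hT hg) _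
      (sub_pos.2 hc))
  exact (sub_le_sub_right hω.out _).trans (le_abs_self _)

end MeanErgodic

section Blocks

variable {A : Type*}

lemma shift_iterate_apply (i : ℕ) (ω : ℤ → A) (j : ℤ) : shift^[i] ω j = ω (j + i) := by
  induction i generalizing ω with
  | zero => simp
  | succ i ih =>
    rw [Function.iterate_succ_apply, ih, shift]
    push_cast
    ring_nf

lemma blk_shift_iterate (i s l : ℕ) (ω : ℤ → A) : blk s l (shift^[i] ω) = blk (s + i) l ω := by
  funext a
  rw [blk, blk, shift_iterate_apply]
  push_cast
  ring_nf

lemma init_blk (s l : ℕ) (ω : ℤ → A) : Fin.init (blk s (l + 1) ω) = blk s l ω := rfl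

lemma blk_add_apply (s l i m : ℕ) (hi : i + m ≤ l) (ω : ℤ → A) :
    (fun a : Fin m => blk s l ω ⟨i + a, by omega⟩) = blk (s + i) m ω := by
  funext a
  simp only [blk]
  push_cast
  ring_nf

variable [MeasurableSpace A]

lemma measurable_blk (s l : ℕ) : Measurable (blk s l : (ℤ → A) → Fin l → A) :=
  measurable_pi_lambda _ fun _ => measurable_pi_apply _

lemma map_blk {μ : Measure (ℤ → A)} (hT : MeasurePreserving shift μ μ) (s l : ℕ) :
    μ.map (blk s l) = μ.map (blk 0 l) := by
  have hblk : (blk s l : (ℤ → A) → Fin l → A) = blk 0 l ∘ shift^[s] := by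
    funext ω
    rw [Function.comp_apply, blk_shift_iterate, zero_add]
  rw [hblk, ← Measure.map_map (measurable_blk 0 l) (hT.iterate s).measurable, (hT.iterate s).map_eq]

lemma pblock_nonneg (μ : Measure (ℤ → A)) (l : ℕ) (w : Fin l → A) : 0 ≤ pblock μ l w :=
  ENNReal.toReal_nonneg

lemma pblock_le_one (μ : Measure (ℤ → A)) [IsProbabilityMeasure μ] (l : ℕ) (w : Fin l → A) :
    pblock μ l w ≤ 1 :=
  measureReal_le_one

lemma Hblock_nonneg [Fintype A] (μ : Measure (ℤ → A)) [IsProbabilityMeasure μ] (l : ℕ) :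
    0 ≤ Hblock μ l :=
  Hent_nonneg (pblock_nonneg μ l) (pblock_le_one μ l)

variable [MeasurableSingletonClass A]

lemma map_blk_real_singleton (μ : Measure (ℤ → A)) (l : ℕ) (w : Fin l → A) :
    (μ.map (blk 0 l)).real {w} = pblock μ l w :=
  map_measureReal_apply (measurable_blk 0 l) (measurableSet_singleton w)

section FiniteMeasure

variable (μ : Measure (ℤ → A)) [IsFiniteMeasure μ]

lemma measureReal_blk_mem {l : ℕ} (S : Finset (Fin l → A)) :
    μ.real {ω | blk 0 l ω ∈ S} = ∑ w ∈ S, pblock μ l w :=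
  (sum_measureReal_preimage_singleton S fun w _ =>
    measurable_blk 0 l (measurableSet_singleton w)).symm

section Finite

variable [Finite A]

lemma integrable_comp_blk {s l : ℕ} (F : (Fin l → A) → ℝ) :
    Integrable (fun ω => F (blk s l ω)) μ :=
  (Integrable.of_finite (μ := μ.map (blk s l))).comp_measurable (measurable_blk s l)

lemma memLp_comp_blk {s l : ℕ} (F : (Fin l → A) → ℝ) (p : ENNReal) :
    MemLp (fun ω => F (blk s l ω)) p μ :=
  MemLp.comp_of_map (.of_discrete (f := F)) (measurable_blk s l).aemeasurable

variable {μ} in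
lemma ae_pblock_blk_pos (hT : MeasurePreserving shift μ μ) (s l : ℕ) :
    ∀ᵐ ω ∂μ, 0 < pblock μ l (blk s l ω) := by
  refine ae_of_ae_map (p := (0 < pblock μ l ·)) (measurable_blk s l).aemeasurable ?_
  rw [map_blk hT, ae_iff_of_countable]
  intro w hw
  rw [← map_blk_real_singleton]
  exact ENNReal.toReal_pos hw (measure_ne_top _ _)

end Finite

variable [Fintype A]

lemma sum_pblock_snoc (l : ℕ) (u : Fin l → A) :
    ∑ x, pblock μ (l + 1) (Fin.snoc u x) = pblock μ l u := by
  classical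
  have hinit (w : Fin (l + 1) → A) : (∃ x, Fin.snoc u x = w) ↔ Fin.init w = u :=
    ⟨by rintro ⟨x, rfl⟩; exact Fin.init_snoc .., fun h => ⟨_, h ▸ Fin.snoc_init_self w⟩⟩
  rw [← Finset.sum_image (f := pblock μ (l + 1)) (g := Fin.snoc (α := fun _ => A) u)
    (Fin.snoc_right_injective (α := fun _ => A) u).injOn, ← measureReal_blk_mem]
  simp [hinit, init_blk, pblock, Measure.real]

lemma integral_comp_blk_zero {l : ℕ} (F : (Fin l → A) → ℝ) :
    ∫ ω, F (blk 0 l ω) ∂μ = ∑ w, pblock μ l w * F w := by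
  rw [← integral_map (measurable_blk 0 l).aemeasurable (.of_discrete),
    integral_fintype .of_finite]
  simp_rw [map_blk_real_singleton, smul_eq_mul]

variable {μ} in
lemma integral_comp_blk (hT : MeasurePreserving shift μ μ) (s : ℕ) {l : ℕ}
    (F : (Fin l → A) → ℝ) : ∫ ω, F (blk s l ω) ∂μ = ∑ w, pblock μ l w * F w := by
  rw [← integral_comp_blk_zero, ← integral_map (measurable_blk s l).aemeasurable (.of_discrete),
    map_blk hT, integral_map (measurable_blk 0 l).aemeasurable (.of_discrete)]

lemma integral_neg_logb_pblock_blk (l : ℕ) :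
    ∫ ω, -logb 2 (pblock μ l (blk 0 l ω)) ∂μ = Hblock μ l := by
  rw [integral_comp_blk_zero μ fun w => -logb 2 (pblock μ l w), Hblock, Hent]
  simp_rw [mul_neg, Finset.sum_neg_distrib]

lemma measureReal_pblock_lt_le {l : ℕ} {q : (Fin l → A) → ℝ} (hq : ∀ w, 0 ≤ q w) :
    μ.real {ω | pblock μ l (blk 0 l ω) < q (blk 0 l ω)} ≤ ∑ w, q w := by
  classical
  calc μ.real {ω | pblock μ l (blk 0 l ω) < q (blk 0 l ω)}
      = ∑ w with pblock μ l w < q w, pblock μ l w := by simp [← measureReal_blk_mem]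
    _ ≤ ∑ w with pblock μ l w < q w, q w :=
        Finset.sum_le_sum fun w hw => (Finset.mem_filter.1 hw).2.le
    _ ≤ ∑ w, q w :=
        Finset.sum_le_sum_of_subset_of_nonneg (Finset.filter_subset _ _) fun w _ _ => hq w

end FiniteMeasure

lemma sum_pblock [Fintype A] (μ : Measure (ℤ → A)) [IsProbabilityMeasure μ] (l : ℕ) :
    ∑ w, pblock μ l w = 1 := by
  simp [← measureReal_blk_mem]

lemma Hblock_le_integral_neg_logb_add [Fintype A] (μ : Measure (ℤ → A)) [IsProbabilityMeasure μ]
    {l : ℕ} {q : (Fin l → A) → ℝ} (hq : ∀ w, 0 < q w) :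
    Hblock μ l ≤ ∫ ω, -logb 2 (q (blk 0 l ω)) ∂μ + logb 2 (∑ w, q w) := by
  rw [integral_comp_blk_zero μ fun w => -logb 2 (q w)]
  exact Hent_le_sum_mul_neg_logb_add (pblock_nonneg μ l) (sum_pblock μ l) hq

end Blocks

section MarkovWeight

variable {A : Type*} {m : ℕ}

/-- The product of the transition weights `c` over the `j` windows of length `m + 1` of a word of
length `m + j`. For transition probabilities `c`, this is the likelihood of the word under the
order-`m` Markov chain, conditionally on its first `m` symbols. -/
def markovWeight (c : (Fin (m + 1) → A) → ℝ) (j : ℕ) (w : Fin (m + j) → A) : ℝ :=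
  ∏ i : Fin j, c fun a => w ⟨i + a, by omega⟩

lemma markovWeight_nonneg {c : (Fin (m + 1) → A) → ℝ} (hc : ∀ v, 0 ≤ c v) (j : ℕ)
    (w : Fin (m + j) → A) : 0 ≤ markovWeight c j w :=
  Finset.prod_nonneg fun _ _ => hc _

lemma markovWeight_snoc (c : (Fin (m + 1) → A) → ℝ) (j : ℕ) (w : Fin (m + j) → A) (x : A) :
    markovWeight c (j + 1) (Fin.snoc w x)
      = markovWeight c j w * c (Fin.snoc (fun a : Fin m => w ⟨j + a, by omega⟩) x) := by
  rw [markovWeight, Fin.prod_univ_castSucc, markovWeight]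
  congr 1
  · refine Finset.prod_congr rfl fun i _ => congrArg c (funext fun a => ?_)
    have hlt : (i + a : ℕ) < m + j := by omega
    simp [Fin.snoc, hlt]
  · refine congrArg c (funext fun a => ?_)
    rcases Fin.eq_castSucc_or_eq_last a with ⟨a, rfl⟩ | rfl
    · have hlt : (j + a : ℕ) < m + j := by omega
      simp [Fin.snoc, hlt]
    · simp [Fin.snoc, add_comm j m]

lemma sum_eq_sum_snoc [Fintype A] {l : ℕ} (F : (Fin (l + 1) → A) → ℝ) :
    ∑ w, F w = ∑ u : Fin l → A, ∑ x, F (Fin.snoc u x) := by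
  rw [← (Fin.snocEquiv fun _ : Fin (l + 1) => A).sum_comp, Fintype.sum_prod_type_right]
  rfl

lemma sum_markovWeight_le_card_pow [Fintype A] {c : (Fin (m + 1) → A) → ℝ} (hc : ∀ v, 0 ≤ c v)
    (hsum : ∀ u : Fin m → A, ∑ x, c (Fin.snoc u x) ≤ 1) (j : ℕ) :
    ∑ w, markovWeight c j w ≤ (Fintype.card A : ℝ) ^ m := by
  induction j with
  | zero => simp [markovWeight]
  | succ j ih =>
    calc ∑ w, markovWeight c (j + 1) w
        = ∑ w : Fin (m + j) → A, markovWeight c j w *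
            ∑ x, c (Fin.snoc (fun a : Fin m => w ⟨j + a, by omega⟩) x) := by
          simp_rw [Finset.mul_sum, ← markovWeight_snoc]
          exact sum_eq_sum_snoc _
      _ ≤ ∑ w : Fin (m + j) → A, markovWeight c j w :=
          Finset.sum_le_sum fun w _ =>
            mul_le_of_le_one_right (markovWeight_nonneg hc j w) (hsum _)
      _ ≤ (Fintype.card A : ℝ) ^ m := ih

lemma markovWeight_blk (c : (Fin (m + 1) → A) → ℝ) (j : ℕ) (ω : ℤ → A) :
    markovWeight c j (blk 0 (m + j) ω) = ∏ i ∈ Finset.range j, c (blk i (m + 1) ω) := by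
  rw [Finset.prod_range, markovWeight]
  refine Finset.prod_congr rfl fun i _ => ?_
  rw [blk_add_apply 0 (m + j) i (m + 1) (by omega), zero_add]

lemma neg_logb_markovWeight_blk {c : (Fin (m + 1) → A) → ℝ} {ω : ℤ → A}
    (hω : ∀ i, c (blk i (m + 1) ω) ≠ 0) (j : ℕ) :
    -logb 2 (markovWeight c j (blk 0 (m + j) ω))
      = birkhoffSum shift (fun ω => -logb 2 (c (blk 0 (m + 1) ω))) j ω := by
  rw [markovWeight_blk, logb_prod _ _ fun i _ => hω i, birkhoffSum, ← Finset.sum_neg_distrib]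
  simp_rw [blk_shift_iterate, zero_add]

end MarkovWeight

section Transition

variable {A : Type*} [MeasurableSpace A]

/-- The conditional probability of the last symbol of `v` given the preceding `m` symbols; it is
`0` when the latter have probability `0`. -/
noncomputable def transition (μ : Measure (ℤ → A)) (m : ℕ) (v : Fin (m + 1) → A) : ℝ :=
  pblock μ (m + 1) v / pblock μ m (Fin.init v)

lemma transition_nonneg (μ : Measure (ℤ → A)) (m : ℕ) (v : Fin (m + 1) → A) :
    0 ≤ transition μ m v :=
  div_nonneg (pblock_nonneg ..) (pblock_nonneg ..)

variable [MeasurableSingletonClass A] (μ : Measure (ℤ → A)) [IsProbabilityMeasure μ]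

lemma sum_transition_snoc_le_one [Fintype A] {m : ℕ} (u : Fin m → A) :
    ∑ x, transition μ m (Fin.snoc u x) ≤ 1 := by
  simp_rw [transition, Fin.init_snoc, ← Finset.sum_div, sum_pblock_snoc]
  exact div_self_le_one _

variable {μ}

lemma ae_transition_blk_pos [Finite A] (hT : MeasurePreserving shift μ μ) (s m : ℕ) :
    ∀ᵐ ω ∂μ, 0 < transition μ m (blk s (m + 1) ω) := by
  filter_upwards [ae_pblock_blk_pos hT s (m + 1), ae_pblock_blk_pos hT s m] with ω hnext hprev
  exact div_pos hnext hprev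

variable [Fintype A]

lemma integral_neg_logb_transition_blk (hT : MeasurePreserving shift μ μ) (m : ℕ) :
    ∫ ω, -logb 2 (transition μ m (blk 0 (m + 1) ω)) ∂μ = Hblock μ (m + 1) - Hblock μ m := by
  rw [← integral_neg_logb_pblock_blk, ← integral_neg_logb_pblock_blk,
    ← integral_sub (integrable_comp_blk μ fun v => -logb 2 (pblock μ (m + 1) v))
      (integrable_comp_blk μ fun u => -logb 2 (pblock μ m u))]
  refine integral_congr_ae ?_
  filter_upwards [ae_pblock_blk_pos hT 0 (m + 1), ae_pblock_blk_pos hT 0 m] with ω hnext hprev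
  rw [transition, init_blk, logb_div hnext.ne' hprev.ne']
  ring

lemma tendsto_measureReal_markovWeight_blk_le (herg : Ergodic shift μ) {m : ℕ} {c : ℝ}
    (hc : Hblock μ (m + 1) - Hblock μ m < c) :
    Tendsto (fun j : ℕ => μ.real
      {ω | markovWeight (transition μ m) j (blk 0 (m + j) ω) ≤ (2 : ℝ) ^ (-(j * c))})
      atTop (nhds 0) := by
  have hT := herg.toMeasurePreserving
  rw [← integral_neg_logb_transition_blk hT] at hc
  refine squeeze_zero' (.of_forall fun j => measureReal_nonneg) ?_
    (tendsto_measureReal_le_birkhoffAverage herg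
      (memLp_comp_blk μ (fun v => -logb 2 (transition μ m v)) 2) hc)
  filter_upwards [eventually_gt_atTop 0] with j hj
  refine ENNReal.toReal_mono (measure_ne_top _ _) (measure_mono_ae ?_)
  filter_upwards [ae_all_iff.2 fun i => ae_transition_blk_pos hT i m] with ω hpos hω
  have hweight : 0 < markovWeight (transition μ m) j (blk 0 (m + j) ω) := by
    rw [markovWeight_blk]
    exact Finset.prod_pos fun i _ => hpos i
  have hlog := logb_le_logb_of_le one_lt_two hweight hω
  rw [logb_rpow two_pos (by norm_num), ← neg_le_neg_iff, neg_neg,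
    neg_logb_markovWeight_blk fun i => (hpos i).ne'] at hlog
  change c ≤ birkhoffAverage ℝ shift _ j ω
  rw [birkhoffAverage, smul_eq_mul, inv_mul_eq_div, le_div_iff₀' (Nat.cast_pos.2 hj)]
  exact hlog

lemma measureReal_pblock_blk_lt_rpow_le (μ : Measure (ℤ → A)) [IsProbabilityMeasure μ] {b : ℝ}
    (hb : 0 ≤ b) (c : ℝ) (m j : ℕ) :
    μ.real {ω | pblock μ (m + j) (blk 0 (m + j) ω) < (2 : ℝ) ^ (-((m + j : ℕ) * b))}
      ≤ ((2 : ℝ) ^ (c - b)) ^ j * (Fintype.card A : ℝ) ^ m + μ.real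
        {ω | markovWeight (transition μ m) j (blk 0 (m + j) ω) ≤ (2 : ℝ) ^ (-(j * c))} := by
  set Q := markovWeight (transition μ m) j
  set r := (2 : ℝ) ^ (c - b)
  have hthreshold : (2 : ℝ) ^ (-((m + j : ℕ) * b)) ≤ r ^ j * (2 : ℝ) ^ (-(j * c)) := by
    rw [← rpow_mul_natCast two_pos.le, ← rpow_add two_pos]
    refine rpow_le_rpow_of_exponent_le one_le_two ?_
    push_cast
    nlinarith [mul_nonneg m.cast_nonneg hb]
  have hsubset : {ω | pblock μ (m + j) (blk 0 (m + j) ω) < (2 : ℝ) ^ (-((m + j : ℕ) * b))}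
      ⊆ {ω | pblock μ (m + j) (blk 0 (m + j) ω) < r ^ j * Q (blk 0 (m + j) ω)}
        ∪ {ω | Q (blk 0 (m + j) ω) ≤ (2 : ℝ) ^ (-(j * c))} := by
    intro ω hω
    rcases le_or_gt (Q (blk 0 (m + j) ω)) ((2 : ℝ) ^ (-(j * c))) with hQ | hQ
    · exact Or.inr hQ
    · exact Or.inl <| hω.out.trans_le <| hthreshold.trans <| by gcongr
  have hsum : ∑ w, r ^ j * Q w ≤ r ^ j * (Fintype.card A : ℝ) ^ m := by
    rw [← Finset.mul_sum]
    gcongr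
    exact sum_markovWeight_le_card_pow (transition_nonneg μ m) (sum_transition_snoc_le_one μ) j
  refine (measureReal_mono hsubset).trans <| (measureReal_union_le _ _).trans ?_
  gcongr
  exact (measureReal_pblock_lt_le μ fun w => mul_nonneg (by positivity)
    (markovWeight_nonneg (transition_nonneg μ m) j w)).trans hsum

end Transition

section EntropyRate

lemma exists_succ_sub_lt_of_tendsto_div {a : ℕ → ℝ} {h c : ℝ}
    (ha : Tendsto (fun n => a n / n) atTop (nhds h)) (hc : h < c) : ∃ m, a (m + 1) - a m < c := by
  by_contra! hincrement
  have hlinear (n : ℕ) : a 0 + n * c ≤ a n := by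
    have := Finset.card_nsmul_le_sum (Finset.range n) _ c fun m _ => hincrement m
    rw [Finset.sum_range_sub, Finset.card_range, nsmul_eq_mul] at this
    linarith
  have hlower : Tendsto (fun n : ℕ => a 0 / n + c) atTop (nhds c) := by
    simpa using (tendsto_const_div_atTop_nhds_zero_nat (a 0)).add_const c
  refine hc.not_ge (le_of_tendsto_of_tendsto hlower ha ?_)
  filter_upwards [eventually_gt_atTop 0] with n hn
  have hn' : (0 : ℝ) < n := Nat.cast_pos.2 hn
  rw [div_add' _ _ _ hn'.ne']
  gcongr
  linarith [hlinear n]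

variable {A : Type*} [Fintype A] [MeasurableSpace A] {μ : Measure (ℤ → A)} [IsProbabilityMeasure μ]
  {h : ℝ}

lemma entropyRate_nonneg (hrate : Tendsto (fun k => Hblock μ k / k) atTop (nhds h)) : 0 ≤ h :=
  ge_of_tendsto' hrate fun k => div_nonneg (Hblock_nonneg μ k) k.cast_nonneg

/-- One half of the Shannon–McMillan theorem, obtained by comparison with a Markov approximation
whose conditional entropy is close to `h`. -/
theorem tendsto_measureReal_pblock_blk_lt [MeasurableSingletonClass A] (herg : Ergodic shift μ)
    (hrate : Tendsto (fun k => Hblock μ k / k) atTop (nhds h)) {b : ℝ} (hb : h < b) :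
    Tendsto (fun k : ℕ => μ.real {ω | pblock μ k (blk 0 k ω) < (2 : ℝ) ^ (-(k * b))})
      atTop (nhds 0) := by
  obtain ⟨c, hhc, hcb⟩ := exists_between hb
  obtain ⟨m, hm⟩ := exists_succ_sub_lt_of_tendsto_div hrate hhc
  set bad : ℕ → ℝ := fun k => μ.real {ω | pblock μ k (blk 0 k ω) < (2 : ℝ) ^ (-(k * b))}
  suffices Tendsto (fun j => bad (m + j)) atTop (nhds 0) from
    (tendsto_add_atTop_iff_nat m).1 <| this.congr fun j => congrArg bad (add_comm m j)
  have hgeometric : Tendsto (fun j => ((2 : ℝ) ^ (c - b)) ^ j * (Fintype.card A : ℝ) ^ m)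
      atTop (nhds 0) := by
    simpa using (tendsto_pow_atTop_nhds_zero_of_lt_one (by positivity)
      (rpow_lt_one_of_one_lt_of_neg one_lt_two (sub_neg.2 hcb))).mul_const _
  refine squeeze_zero (fun j => measureReal_nonneg)
    (measureReal_pblock_blk_lt_rpow_le μ ((entropyRate_nonneg hrate).trans hb.le) c m) ?_
  simpa using hgeometric.add (tendsto_measureReal_markovWeight_blk_le herg hm)

end EntropyRate

section PlugIn

variable {A : Type*}

variable (A) in
/-- Cutting a word of length `N * k` into `N` consecutive blocks of length `k`. -/
def blockEquiv (N k : ℕ) : (Fin (N * k) → A) ≃ (Fin N → Fin k → A) :=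
  (finProdFinEquiv.arrowCongr (.refl A)).symm.trans (.curry _ _ _)

lemma blockEquiv_blk (N k : ℕ) (ω : ℤ → A) :
    blockEquiv A N k (blk 0 (N * k) ω) = fun i : Fin N => blk (i * k) k ω := by
  funext i a
  simp only [blockEquiv, Equiv.trans_apply, Equiv.arrowCongr_symm, Equiv.arrowCongr_apply,
    Equiv.curry_apply, Function.curry_apply, Function.comp_apply, Equiv.refl_symm, Equiv.refl_apply,
    Equiv.symm_symm, blk, finProdFinEquiv_apply_val]
  push_cast
  ring_nf

lemma Dcount_eq_ncard_range (k n : ℕ) (ω : ℤ → A) :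
    Dcount k n ω = (Set.range (blockEquiv A (n / k) k (blk 0 (n / k * k) ω))).ncard := by
  rw [Dcount, blockEquiv_blk]
  congr 1
  ext w
  simp [Fin.exists_iff]

lemma empDist_eq_empirical [DecidableEq A] (k n : ℕ) (ω : ℤ → A) :
    empDist k n ω = empirical (blockEquiv A (n / k) k (blk 0 (n / k * k) ω)) := by
  funext w
  rw [blockEquiv_blk, empDist, empirical, Fintype.card_fin, Finset.sum_range]

variable [MeasurableSpace A] [MeasurableSingletonClass A] {μ : Measure (ℤ → A)}
  [IsProbabilityMeasure μ]

lemma integrable_comp_empDist [Finite A] [DecidableEq A] {k n : ℕ} (F : ((Fin k → A) → ℝ) → ℝ) :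
    Integrable (fun ω => F (empDist k n ω)) μ := by
  simp_rw [empDist_eq_empirical]
  exact integrable_comp_blk μ fun w => F (empirical (blockEquiv A (n / k) k w))

lemma integrable_Dcount [Finite A] (k n : ℕ) : Integrable (fun ω => (Dcount k n ω : ℝ)) μ := by
  simp_rw [Dcount_eq_ncard_range]
  exact integrable_comp_blk μ fun w => ((Set.range (blockEquiv A (n / k) k w)).ncard : ℝ)

lemma integral_Dcount_le [Finite A] (hT : MeasurePreserving shift μ μ) (k n : ℕ) {τ : ℝ}
    (hτ : 0 < τ) :
    ∫ ω, (Dcount k n ω : ℝ) ∂μ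
      ≤ τ⁻¹ + (n / k : ℕ) * μ.real {ω | pblock μ k (blk 0 k ω) < τ} := by
  classical
  cases nonempty_fintype A
  set rare : (Fin k → A) → ℝ := fun w => if pblock μ k w < τ then 1 else 0
  have hrare (s : ℕ) :
      ∫ ω, rare (blk s k ω) ∂μ = μ.real {ω | pblock μ k (blk 0 k ω) < τ} := by
    rw [integral_comp_blk hT]
    simp [rare, ← Finset.sum_filter, ← measureReal_blk_mem]
  have hintegrable (i : Fin (n / k)) : Integrable (fun ω => rare (blk (i * k) k ω)) μ :=
    integrable_comp_blk μ rare
  have hintegrableSum : Integrable (fun ω => ∑ i : Fin (n / k), rare (blk (i * k) k ω)) μ :=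
    integrable_finsetSum _ fun i _ => hintegrable i
  calc ∫ ω, (Dcount k n ω : ℝ) ∂μ
      ≤ ∫ ω, (τ⁻¹ + ∑ i : Fin (n / k), rare (blk (i * k) k ω)) ∂μ := by
        refine integral_mono (integrable_Dcount k n) ((integrable_const _).add hintegrableSum)
          fun ω => ?_
        simp only [Dcount_eq_ncard_range, blockEquiv_blk]
        exact ncard_range_le_inv_add_card (pblock_nonneg μ k) (sum_pblock μ k).le hτ _
    _ = τ⁻¹ + (n / k : ℕ) * μ.real {ω | pblock μ k (blk 0 k ω) < τ} := by
        rw [integral_add (integrable_const _) hintegrableSum,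
          integral_finsetSum _ fun i _ => hintegrable i]
        simp [hrare]

variable [DecidableEq A]

lemma integral_empDist [Finite A] (hT : MeasurePreserving shift μ μ) {k n : ℕ} (hn : 0 < n / k)
    (w : Fin k → A) : ∫ ω, empDist k n ω w ∂μ = pblock μ k w := by
  cases nonempty_fintype A
  have hblock (s : ℕ) : ∫ ω, (if blk s k ω = w then (1 : ℝ) else 0) ∂μ = pblock μ k w := by
    rw [integral_comp_blk hT s fun v => if v = w then (1 : ℝ) else 0]
    simp
  simp_rw [empDist]
  rw [integral_div, integral_finsetSum _ fun i _ =>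
    integrable_comp_blk μ fun v => if v = w then (1 : ℝ) else 0]
  simp_rw [hblock]
  rw [Finset.sum_const, Finset.card_range, nsmul_eq_mul,
    mul_div_cancel_left₀ _ (Nat.cast_ne_zero.2 hn.ne')]

variable [Fintype A]

lemma integral_plugIn_le_Hblock (hT : MeasurePreserving shift μ μ) {k n : ℕ} (hn : 0 < n / k) :
    ∫ ω, plugIn k n ω ∂μ ≤ Hblock μ k := by
  have hjensen := integral_Hent_le_Hent_integral (μ := μ) (P := empDist k n)
    (fun ω w => by rw [empDist_eq_empirical]; exact empirical_nonneg _ w)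
    (fun w => integrable_comp_empDist fun p => p w)
    (fun w => integrable_comp_empDist fun p => negMulLog (p w))
  simp_rw [integral_empDist hT hn] at hjensen
  exact hjensen

variable (μ)

lemma Hblock_le_integral_plugIn_add_integral_Dcount (k n : ℕ) :
    Hblock μ (n / k * k) ≤ (n / k : ℕ) * (∫ ω, plugIn k n ω ∂μ + 1)
      + 2 * (k * logb 2 (Fintype.card A)) * ∫ ω, (Dcount k n ω : ℝ) ∂μ + 2 := by
  set N := n / k
  set blockCost := 2 * (k * logb 2 (Fintype.card A))
  have hplugIn : Integrable (plugIn k n) μ := integrable_comp_empDist Hent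
  have hleading : Integrable (fun ω => N * (plugIn k n ω + 1)) μ :=
    (hplugIn.add (integrable_const 1)).const_mul _
  have hpenalty : Integrable (fun ω => blockCost * (Dcount k n ω : ℝ)) μ :=
    (integrable_Dcount k n).const_mul _
  have hcodelength (ω : ℤ → A) : -logb 2 (mixtureCode (blockEquiv A N k (blk 0 (N * k) ω)))
      ≤ N * (plugIn k n ω + 1) + blockCost * Dcount k n ω := by
    rw [plugIn, empDist_eq_empirical, Dcount_eq_ncard_range]
    simpa [blockCost, logb_pow] using neg_logb_mixtureCode_le (blockEquiv A N k (blk 0 (N * k) ω))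
  have hmass : logb 2 (∑ w, mixtureCode (blockEquiv A N k w)) ≤ 2 := by
    obtain ⟨ω⟩ := μ.nonempty_of_neZero
    rw [(blockEquiv A N k).sum_comp mixtureCode, logb_le_iff_le_rpow one_lt_two <|
      Finset.sum_pos (fun y _ => mixtureCode_pos y)
        ⟨blockEquiv A N k (blk 0 (N * k) ω), Finset.mem_univ _⟩]
    exact (sum_mixtureCode_le_three (Fin N) (Fin k → A)).trans (by norm_num)
  calc Hblock μ (N * k)
      ≤ ∫ ω, -logb 2 (mixtureCode (blockEquiv A N k (blk 0 (N * k) ω))) ∂μ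
          + logb 2 (∑ w, mixtureCode (blockEquiv A N k w)) :=
        Hblock_le_integral_neg_logb_add μ fun w => mixtureCode_pos (blockEquiv A N k w)
    _ ≤ ∫ ω, (N * (plugIn k n ω + 1) + blockCost * Dcount k n ω) ∂μ + 2 :=
        add_le_add (integral_mono
          (integrable_comp_blk μ fun w => -logb 2 (mixtureCode (blockEquiv A N k w)))
          (hleading.add hpenalty) hcodelength) hmass
    _ = N * (∫ ω, plugIn k n ω ∂μ + 1) + blockCost * ∫ ω, (Dcount k n ω : ℝ) ∂μ + 2 := by
        rw [integral_add hleading hpenalty, integral_const_mul, integral_const_mul,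
          integral_add hplugIn (integrable_const 1), integral_const, probReal_univ, one_smul]

variable {μ}

lemma Hblock_div_le_integral_plugIn_div_add (hT : MeasurePreserving shift μ μ) {k n : ℕ}
    (hn : 0 < n / k) {τ : ℝ} (hτ : 0 < τ) :
    Hblock μ (n / k * k) / (n / k * k : ℕ) ≤ (∫ ω, plugIn k n ω ∂μ) / k + (3 / k
      + 2 * logb 2 (Fintype.card A)
        * (τ⁻¹ / (n / k : ℕ) + μ.real {ω | pblock μ k (blk 0 k ω) < τ})) := by
  have hk : (0 : ℝ) < k := Nat.cast_pos.2 (Nat.pos_of_ne_zero fun hk => by simp [hk] at hn)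
  have hN : (1 : ℝ) ≤ (n / k : ℕ) := Nat.one_le_cast.2 hn
  have hL : 0 ≤ logb 2 (Fintype.card A) :=
    div_nonneg (log_natCast_nonneg _) (log_nonneg one_le_two)
  have hH := Hblock_le_integral_plugIn_add_integral_Dcount μ k n
  have hD := integral_Dcount_le hT k n hτ
  generalize n / k = N at *
  rw [Nat.cast_mul, div_le_iff₀ (by positivity)]
  calc Hblock μ (N * k) ≤ N * (∫ ω, plugIn k n ω ∂μ + 1) + 2 * (k * logb 2 (Fintype.card A))
        * (τ⁻¹ + N * μ.real {ω | pblock μ k (blk 0 k ω) < τ}) + 2 * N := by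
        grw [hH, hD]
        linarith
    _ = _ := by
        field_simp
        ring

end PlugIn

section SampleSize

lemma inv_natDiv_le {k : ℕ} (hk : 0 < k) (n : ℕ) : ((n / k : ℕ) : ℝ)⁻¹ ≤ 2 * k / n := by
  rcases Nat.eq_zero_or_pos (n / k) with hN | hN
  · simpa [hN] using by positivity
  have hn : 0 < n := Nat.pos_of_ne_zero fun hn => by simp [hn] at hN
  have hlt : n ≤ 2 * k * (n / k) := by nlinarith [Nat.lt_mul_div_succ n hk]
  rw [inv_le_comm₀ (by positivity) (by positivity), inv_div, div_le_iff₀ (by positivity), mul_comm]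
  exact_mod_cast hlt

variable {β a b : ℝ} {n : ℕ → ℕ}

lemma tendsto_rpow_div_natDiv_of_rpow_le (hβ : 1 < β) (hab : a < b)
    (hn : ∀ k : ℕ, β ^ (k * b) ≤ n k) :
    Tendsto (fun k : ℕ => β ^ (k * a) / (n k / k : ℕ)) atTop (nhds 0) := by
  have hβ0 : 0 < β := zero_lt_one.trans hβ
  have hlim := (tendsto_self_mul_const_pow_of_lt_one (rpow_nonneg hβ0.le (a - b))
    (rpow_lt_one_of_one_lt_of_neg hβ (sub_neg.2 hab))).const_mul 2
  rw [mul_zero] at hlim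
  refine squeeze_zero' (.of_forall fun k => by positivity) ?_ hlim
  filter_upwards [eventually_gt_atTop 0] with k hk
  calc β ^ (k * a) / (n k / k : ℕ) ≤ β ^ (k * a) * (2 * k / β ^ (k * b)) := by
        rw [div_eq_mul_inv]
        gcongr
        exact (inv_natDiv_le hk (n k)).trans (by gcongr; exact hn k)
    _ = 2 * (k * (β ^ (a - b)) ^ k) := by
        rw [← rpow_mul_natCast hβ0.le, sub_mul, rpow_sub hβ0, mul_comm a, mul_comm b]
        ring

lemma eventually_natDiv_pos_of_rpow_le (hβ : 1 < β) (hb : 0 < b)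
    (hn : ∀ k : ℕ, β ^ (k * b) ≤ n k) : ∀ᶠ k in atTop, 0 < n k / k := by
  have hβ0 : 0 < β := zero_lt_one.trans hβ
  have hlim := tendsto_self_mul_const_pow_of_lt_one (rpow_nonneg hβ0.le (-b))
    (rpow_lt_one_of_one_lt_of_neg hβ (neg_lt_zero.2 hb))
  filter_upwards [hlim.eventually_lt_const zero_lt_one, eventually_gt_atTop 0] with k hlt hk
  rw [← rpow_mul_natCast hβ0.le, neg_mul, rpow_neg hβ0.le, mul_inv_lt_iff₀ (by positivity), one_mul,
    mul_comm b] at hlt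
  exact Nat.div_pos (by exact_mod_cast (hlt.trans_le (hn k)).le) hk

end SampleSize

/-- Theorem 1, expectation form: for a stationary ergodic process with entropy
rate `h`, any `ε > 0` and sample sizes `n(k) ≥ 2^{k(h+ε)}`, we have
`lim_{k→∞} E[H(k, X_1^{n(k)})]/k = h`. -/
theorem expected_plugIn_rate_tendsto
    {μ : Measure (ℤ → 𝕏)} [IsProbabilityMeasure μ]
    (herg : Ergodic shift μ) (h : ℝ)
    (hrate : Tendsto (fun k => Hblock μ k / k) atTop (nhds h))
    (ε : ℝ) (hε : 0 < ε) (n : ℕ → ℕ)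
    (hn : ∀ k : ℕ, (2 : ℝ) ^ ((k : ℝ) * (h + ε)) ≤ (n k : ℝ)) :
    Tendsto (fun k => (∫ ω, plugIn k (n k) ω ∂μ) / k) atTop (nhds h) := by
  have hT := herg.toMeasurePreserving
  obtain ⟨b, hhb, hb⟩ := exists_between (lt_add_of_pos_right h hε)
  have hnk : ∀ᶠ k in atTop, 0 < n k / k :=
    eventually_natDiv_pos_of_rpow_le one_lt_two (add_pos_of_nonneg_of_pos
      (entropyRate_nonneg hrate) hε) hn
  have hlength : Tendsto (fun k => n k / k * k) atTop atTop :=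
    tendsto_atTop_mono' _ (hnk.mono fun k hk => Nat.le_mul_of_pos_left k hk) tendsto_id
  have herror := (tendsto_const_div_atTop_nhds_zero_nat (3 : ℝ)).add <|
    ((tendsto_rpow_div_natDiv_of_rpow_le one_lt_two hb hn).add
      (tendsto_measureReal_pblock_blk_lt herg hrate hhb)).const_mul
        (2 * logb 2 (Fintype.card 𝕏))
  have hlower := (hrate.comp hlength).sub herror
  simp only [add_zero, mul_zero, sub_zero] at hlower
  refine tendsto_of_tendsto_of_tendsto_of_le_of_le' hlower hrate ?_ ?_
  · filter_upwards [hnk] with k hk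
    have hle := Hblock_div_le_integral_plugIn_div_add hT hk
      (rpow_pos_of_pos two_pos (-(k * b)))
    rw [← rpow_neg two_pos.le, neg_neg] at hle
    exact sub_le_iff_le_add.2 hle
  · filter_upwards [hnk] with k hk
    gcongr
    exact integral_plugIn_le_Hblock hT hk
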